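/- Under the polynomial parametric setting and the Archimedean assumption, assume K_y is nonempty for every y ∈ Y, that for some index k the description of K includes the boolean constraint x_k² − x_k = 0, and that for φ-almost all y ∈ Y the value J(y) is attained at a unique minimizer x*(y). For each i ≥ i_0 let z^i be a nearly optimal feasible solution of the i-th semidefinite relaxation with L_{z^i}(f) ≤ ρ_i + 1/i. Then lim_{i→∞} z^i_{e(k)0} = φ({ y ∈ Y : x*_k(y) = 1 }); consequently x*_k(y) = 1 for φ-almost all y ∈ Y if and only if lim_{i→∞} z^i_{e(k)0} = 1, and x*_k(y) = 0 for φ-almost all y ∈ Y if and only if lim_{i→∞} z^i_{e(k)0} = 0. -/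

import Mathlib

open MeasureTheory MvPolynomial Filter Topology Set

noncomputable section

/-- The Riesz-like linear functional `L_z` associated with a double-indexed real
sequence `z = (z_{αβ})`, sending `Σ f_{αβ} x^α y^β` to `Σ f_{αβ} z_{αβ}`. -/
def Lz (n p : ℕ) (z : (Fin n → ℕ) → (Fin p → ℕ) → ℝ)
    (q : MvPolynomial (Fin n ⊕ Fin p) ℝ) : ℝ :=
  ∑ d ∈ q.support, q.coeff d * z (fun k => d (Sum.inl k)) (fun l => d (Sum.inr l))

/-- Every monomial `x^α y^β` of `q` satisfies `|α| ≤ i` and `|β| ≤ i`, i.e. `q` is in the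
span of the monomial basis indexing the moment matrix `M_i`. -/
def DegOK (n p : ℕ) (i : ℕ) (q : MvPolynomial (Fin n ⊕ Fin p) ℝ) : Prop :=
  ∀ d ∈ q.support, (∑ k, d (Sum.inl k)) ≤ i ∧ (∑ l, d (Sum.inr l)) ≤ i

/-- `⌈deg h / 2⌉`. -/
def halfDeg {σ : Type*} (h : MvPolynomial σ ℝ) : ℕ := (h.totalDegree + 1) / 2

/-- Feasibility of the sequence `z` for the `i`-th moment relaxation:
`M_i(z) ⪰ 0`, `M_{i-v_j}(h_j z) ⪰ 0` for all `j`, and `L_z(y^β) = γ_β` for `|β| ≤ 2i`.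
Positive semidefiniteness of the moment (resp. localizing) matrix is expressed through
nonnegativity of the associated quadratic forms `c ↦ cᵀ M_i(z) c = L_z(q²)`
(resp. `cᵀ M_{i-v_j}(h_j z) c = L_z(h_j q²)`), `q` ranging over the polynomials spanned
by the monomials indexing the matrix. -/
def RelaxFeasible (n p : ℕ) {ι : Type*} [Fintype ι]
    (H : ι → MvPolynomial (Fin n ⊕ Fin p) ℝ)
    (γ : (Fin p → ℕ) → ℝ) (i : ℕ)
    (z : (Fin n → ℕ) → (Fin p → ℕ) → ℝ) : Prop :=
  (∀ q, DegOK n p i q → 0 ≤ Lz n p z (q ^ 2)) ∧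
  (∀ j, ∀ q, DegOK n p (i - halfDeg (H j)) q → 0 ≤ Lz n p z (H j * q ^ 2)) ∧
  (∀ β : Fin p → ℕ, (∑ l, β l) ≤ 2 * i → z (fun _ => 0) β = γ β)

/-- Optimal value `ρ_i` of the `i`-th (primal) semidefinite relaxation. -/
def rhoSDP (n p : ℕ) {ι : Type*} [Fintype ι]
    (H : ι → MvPolynomial (Fin n ⊕ Fin p) ℝ)
    (γ : (Fin p → ℕ) → ℝ) (f : MvPolynomial (Fin n ⊕ Fin p) ℝ) (i : ℕ) : ℝ :=
  sInf {r | ∃ z, RelaxFeasible n p H γ i z ∧ r = Lz n p z f}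

/-- Evaluation of a polynomial in `(x, y)` at a point of `ℝ^n × ℝ^p`. -/
def evalXY (n p : ℕ) (q : MvPolynomial (Fin n ⊕ Fin p) ℝ)
    (w : (Fin n → ℝ) × (Fin p → ℝ)) : ℝ :=
  eval (Sum.elim w.1 w.2) q

/-- Optimal value `ρ` of the infinite-dimensional problem `P`: the infimum of `∫_K f dμ`
over finite Borel measures `μ` on `K` whose marginal on `ℝ^p` is `φ`. -/
def rhoP (n p : ℕ) (f : MvPolynomial (Fin n ⊕ Fin p) ℝ)
    (K : Set ((Fin n → ℝ) × (Fin p → ℝ))) (φ : Measure (Fin p → ℝ)) : ℝ :=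
  sInf {r | ∃ μ : Measure ((Fin n → ℝ) × (Fin p → ℝ)),
    IsFiniteMeasure μ ∧ μ Kᶜ = 0 ∧ μ.map Prod.snd = φ ∧
    r = ∫ w in K, evalXY n p f w ∂μ}

/-- `i₀ := max(⌈deg f / 2⌉, max_j ⌈deg h_j / 2⌉)`. -/
def iZero (n p : ℕ) {ι : Type*} [Fintype ι]
    (H : ι → MvPolynomial (Fin n ⊕ Fin p) ℝ)
    (f : MvPolynomial (Fin n ⊕ Fin p) ℝ) : ℕ :=
  max (halfDeg f) (Finset.univ.sup fun j => halfDeg (H j))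

/-- The Archimedean (Putinar) assumption for the family `H`: for some `N`,
`N - ‖(x,y)‖²` lies in the quadratic module generated by the `H j`. -/
def ArchimedeanQM (n p : ℕ) {ι : Type*} [Fintype ι]
    (H : ι → MvPolynomial (Fin n ⊕ Fin p) ℝ) : Prop :=
  ∃ (N : ℝ) (σ0 : MvPolynomial (Fin n ⊕ Fin p) ℝ)
    (σ : ι → MvPolynomial (Fin n ⊕ Fin p) ℝ),
    IsSumSq σ0 ∧ (∀ j, IsSumSq (σ j)) ∧
    C N - (∑ i : Fin n ⊕ Fin p, X i ^ 2) = σ0 + ∑ j, σ j * H j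

/-!
Along any ultrafilter, the functionals `L_{z^i}` of nearly optimal solutions converge pointwise to
a normalized functional `Λ` that is nonnegative on the quadratic module, and the Archimedean
assumption bounds the multiplications by the variables for the seminorm `q ↦ √(Λ (q ^ 2))`. These
functionals form a compact convex set whose extreme points are evaluations at feasible points, so
by Krein–Milman `Λ` is integration against a probability measure `ν` on `K` (Putinar's theorem).
The `y`-marginal of `ν` has the moments of `φ`, hence equals `φ`. Since the image of `φ` under
`y ↦ (x*(y), y)` is itself feasible, `∫ f dν` is at most the `φ`-average of the optimal values,
which by uniqueness of the minimizers forces `ν` onto the graph of `x*`. So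
`Λ q = ∫ q (x*(y), y) dφ` for every polynomial `q`, independently of the ultrafilter; for `q = x_k`
boolean this is the persistency.
-/

section PositiveFunctional

variable {A : Type*} [CommRing A] [Algebra ℝ A] {L : A →ₗ[ℝ] ℝ} {R : ℝ} {x : A}

/-- A functional on a commutative algebra is positive semidefinite if it is nonnegative on squares;
for `L_z` this says that all moment matrices of `z` are positive semidefinite. -/
def IsPSD (L : A →ₗ[ℝ] ℝ) : Prop :=
  ∀ a, 0 ≤ L (a ^ 2)

/-- The functional `a ↦ L (g * a)`, whose moment matrices are the localizing matrices of `g`. -/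
def localize (g : A) (L : A →ₗ[ℝ] ℝ) : A →ₗ[ℝ] ℝ :=
  L ∘ₗ LinearMap.mulLeft ℝ g

/-- Multiplication by `x` is bounded by `R` for the seminorm `a ↦ √(L (a ^ 2))`. -/
def IsMulBounded (L : A →ₗ[ℝ] ℝ) (R : ℝ) (x : A) : Prop :=
  ∀ a, L ((x * a) ^ 2) ≤ R ^ 2 * L (a ^ 2)

@[simp]
lemma localize_apply (g a : A) (L : A →ₗ[ℝ] ℝ) : localize g L a = L (g * a) := rfl

lemma localize_comm (g h : A) (L : A →ₗ[ℝ] ℝ) :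
    localize g (localize h L) = localize h (localize g L) := by
  ext a
  simp only [localize_apply, mul_left_comm]

lemma localize_smul (g : A) (c : ℝ) (L : A →ₗ[ℝ] ℝ) : localize g (c • L) = c • localize g L := rfl

lemma IsPSD.smul (hL : IsPSD L) {c : ℝ} (hc : 0 ≤ c) : IsPSD (c • L) :=
  fun a => mul_nonneg hc (hL a)

lemma IsPSD.add {M : A →ₗ[ℝ] ℝ} (hL : IsPSD L) (hM : IsPSD M) : IsPSD (L + M) :=
  fun a => add_nonneg (hL a) (hM a)

lemma IsMulBounded.smul (hx : IsMulBounded L R x) {c : ℝ} (hc : 0 ≤ c) :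
    IsMulBounded (c • L) R x := fun a => by
  simpa only [LinearMap.smul_apply, smul_eq_mul, mul_left_comm] using
    mul_le_mul_of_nonneg_left (hx a) hc

lemma IsMulBounded.add {M : A →ₗ[ℝ] ℝ} (hL : IsMulBounded L R x) (hM : IsMulBounded M R x) :
    IsMulBounded (L + M) R x := fun a => by
  simpa only [LinearMap.add_apply, mul_add] using add_le_add (hL a) (hM a)

lemma IsPSD.sq_map_mul_le (hL : IsPSD L) (a b : A) :
    L (a * b) ^ 2 ≤ L (a ^ 2) * L (b ^ 2) := by
  simpa [pow_two] using LinearMap.BilinForm.apply_sq_le_of_symm ((LinearMap.mul ℝ A).compr₂ L)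
    (fun c => by simpa [pow_two] using hL c) ⟨fun c d => by simp [mul_comm]⟩ a b

lemma IsMulBounded.pow (hx : IsMulBounded L R x) (l : ℕ) : IsMulBounded L (R ^ l) (x ^ l) := by
  induction l with
  | zero => simp [IsMulBounded]
  | succ l ih =>
    intro a
    calc L ((x ^ (l + 1) * a) ^ 2) = L ((x * (x ^ l * a)) ^ 2) := by ring_nf
      _ ≤ R ^ 2 * L ((x ^ l * a) ^ 2) := hx _
      _ ≤ R ^ 2 * ((R ^ l) ^ 2 * L (a ^ 2)) := by gcongr; exact ih a
      _ = (R ^ (l + 1)) ^ 2 * L (a ^ 2) := by ring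

/-- Log-convexity makes the ratios `a (l + 1) / a l` nondecreasing, so if the first one exceeded `r`
then `a` would outgrow `B * r ^ l`. -/
lemma le_mul_of_sq_le_mul_of_le_mul_pow {a : ℕ → ℝ} {r B : ℝ} (hr : 0 < r) (ha : ∀ l, 0 ≤ a l)
    (hconv : ∀ l, a (l + 1) ^ 2 ≤ a l * a (l + 2)) (hB : ∀ l, a l ≤ B * r ^ l) :
    a 1 ≤ r * a 0 := by
  by_contra! hlt
  have ha0 : 0 < a 0 := (ha 0).lt_of_ne fun h => by
    have := hconv 0
    rw [← h, zero_mul] at this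
    rw [← h, mul_zero, pow_eq_zero_iff two_ne_zero |>.1 (this.antisymm (sq_nonneg _))] at hlt
    exact hlt.false
  set t := a 1 / a 0
  have hrt : r < t := (lt_div_iff₀ ha0).2 hlt
  have hratio : ∀ l, 0 < a l ∧ t * a l ≤ a (l + 1) := by
    intro l
    induction l with
    | zero => exact ⟨ha0, (div_mul_cancel₀ _ ha0.ne').le⟩
    | succ l ih =>
      obtain ⟨hpos, hle⟩ := ih
      refine ⟨(mul_pos (hr.trans hrt) hpos).trans_le hle, le_of_mul_le_mul_left ?_ hpos⟩
      calc a l * (t * a (l + 1)) = (t * a l) * a (l + 1) := by ring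
        _ ≤ a (l + 1) * a (l + 1) := mul_le_mul_of_nonneg_right hle (ha _)
        _ ≤ a l * a (l + 2) := by simpa only [pow_two] using hconv l
  have hgeom : ∀ l, t ^ l * a 0 ≤ a l := by
    intro l
    induction l with
    | zero => simp
    | succ l ih =>
      calc t ^ (l + 1) * a 0 = t * (t ^ l * a 0) := by ring
        _ ≤ t * a l := mul_le_mul_of_nonneg_left ih (hr.trans hrt).le
        _ ≤ a (l + 1) := (hratio l).2
  obtain ⟨l, hl⟩ := ((tendsto_pow_atTop_atTop_of_one_lt
    ((one_lt_div hr).2 hrt)).eventually_gt_atTop (B / a 0)).exists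
  rw [div_pow, div_lt_div_iff₀ ha0 (pow_pos hr l)] at hl
  exact hl.not_ge ((hgeom l).trans (hB l))

/-- Cauchy–Schwarz only bounds `L (g * (x ^ l * a) ^ 2)` by a constant times `(R ^ 2) ^ l`, and
log-convexity in `l` removes the constant. -/
lemma IsPSD.isMulBounded_localize (hL : IsPSD L) (hx : IsMulBounded L R x) (hR : 0 < R) {g : A}
    (hg : IsPSD (localize g L)) : IsMulBounded (localize g L) R x := by
  intro a
  suffices h : localize g L ((x ^ 1 * a) ^ 2) ≤ R ^ 2 * localize g L ((x ^ 0 * a) ^ 2) by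
    simpa only [pow_one, pow_zero, one_mul] using h
  refine le_mul_of_sq_le_mul_of_le_mul_pow (a := fun l => localize g L ((x ^ l * a) ^ 2))
    (B := √(L (1 ^ 2) * L ((g * a ^ 2) ^ 2))) (by positivity) (fun l => hg _) (fun l => ?_)
    fun l => ?_
  · have := hg.sq_map_mul_le (x ^ l * a) (x ^ (l + 2) * a)
    rwa [show x ^ l * a * (x ^ (l + 2) * a) = (x ^ (l + 1) * a) ^ 2 by ring] at this
  · have hsq : L (g * (x ^ l * a) ^ 2) ^ 2 ≤
        L (1 ^ 2) * L ((g * a ^ 2) ^ 2) * ((R ^ 2) ^ l) ^ 2 := by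
      calc L (g * (x ^ l * a) ^ 2) ^ 2 = L ((x ^ (2 * l) * 1) * (g * a ^ 2)) ^ 2 := by ring_nf
        _ ≤ L ((x ^ (2 * l) * 1) ^ 2) * L ((g * a ^ 2) ^ 2) := hL.sq_map_mul_le _ _
        _ ≤ ((R ^ (2 * l)) ^ 2 * L (1 ^ 2)) * L ((g * a ^ 2) ^ 2) :=
          mul_le_mul_of_nonneg_right (hx.pow _ _) (hL _)
        _ = L (1 ^ 2) * L ((g * a ^ 2) ^ 2) * ((R ^ 2) ^ l) ^ 2 := by ring
    rw [localize_apply, ← Real.sqrt_sq (by positivity : 0 ≤ (R ^ 2) ^ l), ← Real.sqrt_mul']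
    · exact Real.le_sqrt_of_sq_le hsq
    · positivity

lemma IsPSD.abs_map_mul_sq_le (hL : IsPSD L) (hx : IsMulBounded L R x) (hR : 0 ≤ R) (a : A) :
    |L (x * a ^ 2)| ≤ R * L (a ^ 2) := by
  refine abs_le_of_sq_le_sq ?_ (mul_nonneg hR (hL a))
  calc L (x * a ^ 2) ^ 2 = L (x * a * a) ^ 2 := by ring_nf
    _ ≤ L ((x * a) ^ 2) * L (a ^ 2) := hL.sq_map_mul_le _ _
    _ ≤ R ^ 2 * L (a ^ 2) * L (a ^ 2) := mul_le_mul_of_nonneg_right (hx a) (hL a)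
    _ = (R * L (a ^ 2)) ^ 2 := by ring

lemma IsPSD.localize_affine (hL : IsPSD L) (hx : IsMulBounded L R x) (hR : 0 ≤ R) {s t : ℝ}
    (hst : |t| * R ≤ s) : IsPSD (localize (s • 1 + t • x) L) := by
  intro a
  rw [localize_apply, add_mul, smul_one_mul, smul_mul_assoc, map_add, map_smul, map_smul,
    smul_eq_mul, smul_eq_mul]
  have h : |t * L (x * a ^ 2)| ≤ s * L (a ^ 2) := by
    calc |t * L (x * a ^ 2)| = |t| * |L (x * a ^ 2)| := abs_mul _ _
      _ ≤ |t| * (R * L (a ^ 2)) :=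
        mul_le_mul_of_nonneg_left (hL.abs_map_mul_sq_le hx hR a) (abs_nonneg t)
      _ = |t| * R * L (a ^ 2) := (mul_assoc _ _ _).symm
      _ ≤ s * L (a ^ 2) := mul_le_mul_of_nonneg_right hst (hL a)
  linarith [neg_le_of_abs_le h]

end PositiveFunctional

section State

variable {σ ι : Type*} {H : ι → MvPolynomial σ ℝ} {R : ℝ} {L : MvPolynomial σ ℝ →ₗ[ℝ] ℝ}

/-- A normalized positive functional on the polynomials whose localizing functionals at the
constraints `H j` are positive too, and for which multiplication by each variable is bounded by `R`.
These are the candidates for integration against a probability measure on `{H ≥ 0}`. -/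
structure IsState (H : ι → MvPolynomial σ ℝ) (R : ℝ) (L : MvPolynomial σ ℝ →ₗ[ℝ] ℝ) : Prop where
  map_one : L 1 = 1
  isPSD : IsPSD L
  isPSD_localize : ∀ j, IsPSD (localize (H j) L)
  isMulBounded_X : ∀ i, IsMulBounded L R (X i)

namespace IsState

lemma convexCombination {L M : MvPolynomial σ ℝ →ₗ[ℝ] ℝ} (hL : IsState H R L) (hM : IsState H R M)
    {a b : ℝ} (ha : 0 ≤ a) (hb : 0 ≤ b) (hab : a + b = 1) : IsState H R (a • L + b • M) where
  map_one := by simp [hL.map_one, hM.map_one, hab]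
  isPSD := (hL.isPSD.smul ha).add (hM.isPSD.smul hb)
  isPSD_localize j := ((hL.isPSD_localize j).smul ha).add ((hM.isPSD_localize j).smul hb)
  isMulBounded_X i := ((hL.isMulBounded_X i).smul ha).add ((hM.isMulBounded_X i).smul hb)

lemma abs_map_X_le (hL : IsState H R L) (hR : 0 ≤ R) (i : σ) : |L (X i)| ≤ R := by
  simpa [hL.map_one] using hL.isPSD.abs_map_mul_sq_le (hL.isMulBounded_X i) hR 1

lemma map_affine_pos (hL : IsState H R L) (hR : 0 ≤ R) (i : σ) {s t : ℝ} (hst : |t| * R < s) :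
    0 < L (s • 1 + t • X i) := by
  have h : |t * L (X i)| < s := by
    rw [abs_mul]
    exact (mul_le_mul_of_nonneg_left (hL.abs_map_X_le hR i) (abs_nonneg t)).trans_lt hst
  simpa [hL.map_one] using neg_lt_iff_pos_add'.1 (neg_lt_of_abs_lt h)

lemma inv_smul_localize_affine (hL : IsState H R L) (hR : 0 < R) (i : σ) {s t : ℝ}
    (hst : |t| * R < s) :
    IsState H R ((L (s • 1 + t • X i))⁻¹ • localize (s • 1 + t • X i) L) := by
  have hpos := hL.map_affine_pos hR.le i hst
  have hpsd : ∀ {M : MvPolynomial σ ℝ →ₗ[ℝ] ℝ}, IsPSD M → IsMulBounded M R (X i) →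
      IsPSD (localize (s • 1 + t • X i) M) := fun hM hX => hM.localize_affine hX hR.le hst.le
  refine ⟨?_, (hpsd hL.isPSD (hL.isMulBounded_X i)).smul (inv_nonneg.2 hpos.le), fun j => ?_,
    fun k => ?_⟩
  · rw [LinearMap.smul_apply, localize_apply, mul_one, smul_eq_mul, inv_mul_cancel₀ hpos.ne']
  · rw [localize_smul, localize_comm]
    exact (hpsd (hL.isPSD_localize j) (hL.isPSD.isMulBounded_localize (hL.isMulBounded_X i) hR
      (hL.isPSD_localize j))).smul (inv_nonneg.2 hpos.le)
  · exact (hL.isPSD.isMulBounded_localize (hL.isMulBounded_X k) hR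
      (hpsd hL.isPSD (hL.isMulBounded_X i))).smul (inv_nonneg.2 hpos.le)

end IsState

/-- The set of states, as a subset of the space of functions with pointwise convergence. -/
def stateSpace (H : ι → MvPolynomial σ ℝ) (R : ℝ) : Set (MvPolynomial σ ℝ → ℝ) :=
  (fun L : MvPolynomial σ ℝ →ₗ[ℝ] ℝ => ⇑L) '' {L | IsState H R L}

lemma convex_stateSpace : Convex ℝ (stateSpace H R) := by
  rintro _ ⟨L, hL, rfl⟩ _ ⟨M, hM, rfl⟩ a b ha hb hab
  exact ⟨a • L + b • M, hL.convexCombination hM ha hb hab, rfl⟩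

/-- With `u = 1/2 + t X i` and `v = 1/2 - t X i`, a state `L` is the convex combination, with
weights `L u` and `L v`, of the states obtained by localizing `L` at `u` and at `v`; if `L` is
extreme then all three agree. -/
lemma map_X_mul_of_mem_extremePoints (hR : 0 < R) (hL : ⇑L ∈ (stateSpace H R).extremePoints ℝ)
    (i : σ) (q : MvPolynomial σ ℝ) : L (X i * q) = L (X i) * L q := by
  obtain ⟨⟨M, hM, hML⟩, hext⟩ := hL
  obtain rfl : M = L := DFunLike.coe_injective hML
  set t : ℝ := (2 * (R + 1))⁻¹ with ht
  have ht0 : 0 < t := by positivity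
  have htR : |t| * R < 2⁻¹ := by
    rw [abs_of_pos ht0, ht, inv_mul_lt_iff₀ (by positivity)]
    linarith
  have htR' : |-t| * R < 2⁻¹ := by rwa [abs_neg]
  set u : MvPolynomial σ ℝ := (2⁻¹ : ℝ) • 1 + t • X i with hu
  set v : MvPolynomial σ ℝ := (2⁻¹ : ℝ) • 1 + (-t) • X i with hv
  have hMu : 0 < M u := hM.map_affine_pos hR.le i htR
  have hMv : 0 < M v := hM.map_affine_pos hR.le i htR'
  have huv : u + v = 1 := by
    rw [hu, hv, neg_smul, add_add_add_comm, ← add_smul, add_neg_cancel, add_zero]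
    norm_num
  have hseg : ⇑M ∈ openSegment ℝ (⇑((M u)⁻¹ • localize u M)) (⇑((M v)⁻¹ • localize v M)) := by
    refine ⟨M u, M v, hMu, hMv, by rw [← map_add, huv, hM.map_one], funext fun a => ?_⟩
    simp only [LinearMap.coe_smul, Pi.add_apply, Pi.smul_apply, smul_eq_mul, localize_apply,
      mul_inv_cancel_left₀ hMu.ne', mul_inv_cancel_left₀ hMv.ne']
    rw [← map_add, ← add_mul, huv, one_mul]
  have hloc : (M u)⁻¹ * M (u * q) = M q := congrFun (hext
    ⟨_, hM.inv_smul_localize_affine hR i htR, rfl⟩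
    ⟨_, hM.inv_smul_localize_affine hR i htR', rfl⟩ hseg) q
  rw [inv_mul_eq_iff_eq_mul₀ hMu.ne', hu, add_mul, smul_one_mul, smul_mul_assoc] at hloc
  simp only [map_add, map_smul, smul_eq_mul, hM.map_one] at hloc
  exact mul_left_cancel₀ ht0.ne' (by linear_combination hloc)

lemma eq_eval_of_map_X_mul (h1 : L 1 = 1) (hX : ∀ i q, L (X i * q) = L (X i) * L q)
    (q : MvPolynomial σ ℝ) : L q = eval (fun i => L (X i)) q := by
  induction q using MvPolynomial.induction_on with
  | C a => rw [eval_C, ← mul_one (C a), ← smul_eq_C_mul, map_smul, h1, smul_eq_mul, mul_one]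
  | add p q hp hq => rw [map_add, map_add, hp, hq]
  | mul_X p i hp => rw [mul_comm, hX, hp, map_mul, eval_X]

/-- The points of the box `[-R, R]^σ` at which all the constraints `H` are nonnegative. -/
def boxFeasibleSet (H : ι → MvPolynomial σ ℝ) (R : ℝ) : Set (σ → ℝ) :=
  {c | (∀ i, |c i| ≤ R) ∧ ∀ j, 0 ≤ eval c (H j)}

lemma isCompact_boxFeasibleSet : IsCompact (boxFeasibleSet H R) := by
  have hbox : boxFeasibleSet H R = univ.pi (fun _ => Icc (-R) R) ∩ ⋂ j, {c | 0 ≤ eval c (H j)} := by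
    ext c
    simp only [boxFeasibleSet, abs_le, mem_ofPred_eq, mem_inter_iff, mem_univ_pi, mem_Icc,
      mem_iInter]
  rw [hbox]
  exact (isCompact_univ_pi fun _ => isCompact_Icc).inter_right
    (isClosed_iInter fun j => isClosed_le continuous_const (continuous_eval (H j)))

lemma exists_eq_eval_of_mem_extremePoints (hR : 0 < R) {F : MvPolynomial σ ℝ → ℝ}
    (hF : F ∈ (stateSpace H R).extremePoints ℝ) :
    ∃ c ∈ boxFeasibleSet H R, F = fun q => eval c q := by
  obtain ⟨L, hL, rfl⟩ := hF.1
  have heval := eq_eval_of_map_X_mul hL.map_one (map_X_mul_of_mem_extremePoints hR hF)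
  refine ⟨fun i => L (X i), ⟨hL.abs_map_X_le hR.le, fun j => ?_⟩, funext heval⟩
  rw [← heval]
  simpa using hL.isPSD_localize j 1

end State

section AsymptoticState

variable {σ ι : Type*} {H : ι → MvPolynomial σ ℝ} {R : ℝ}
  {l : Filter (MvPolynomial σ ℝ →ₗ[ℝ] ℝ)}

/-- Along the filter `l`, every single instance of the conditions defining a state holds eventually.
Functionals coming from truncated moment sequences of growing order have this property, although
none of them needs to be a state. -/
structure IsAsymptoticState (H : ι → MvPolynomial σ ℝ) (R : ℝ)
    (l : Filter (MvPolynomial σ ℝ →ₗ[ℝ] ℝ)) : Prop where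
  map_one : ∀ᶠ L in l, L 1 = 1
  sq_nonneg : ∀ q, ∀ᶠ L in l, 0 ≤ L (q ^ 2)
  localize_sq_nonneg : ∀ j q, ∀ᶠ L in l, 0 ≤ L (H j * q ^ 2)
  X_mul_sq_le : ∀ i q, ∀ᶠ L in l, L ((X i * q) ^ 2) ≤ R ^ 2 * L (q ^ 2)

namespace IsAsymptoticState

lemma principal : IsAsymptoticState H R (𝓟 {L | IsState H R L}) where
  map_one := fun _ hL => hL.map_one
  sq_nonneg q := fun _ hL => hL.isPSD q
  localize_sq_nonneg j q := fun _ hL => hL.isPSD_localize j q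
  X_mul_sq_le i q := fun _ hL => hL.isMulBounded_X i q

lemma mono {l' : Filter (MvPolynomial σ ℝ →ₗ[ℝ] ℝ)} (hl : IsAsymptoticState H R l) (h : l' ≤ l) :
    IsAsymptoticState H R l' where
  map_one := h hl.map_one
  sq_nonneg q := h (hl.sq_nonneg q)
  localize_sq_nonneg j q := h (hl.localize_sq_nonneg j q)
  X_mul_sq_le i q := h (hl.X_mul_sq_le i q)

lemma exists_map_sq_le (hl : IsAsymptoticState H R l) (q : MvPolynomial σ ℝ) :
    ∃ B : ℝ, ∀ᶠ L in l, L (q ^ 2) ≤ B := by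
  induction q using MvPolynomial.induction_on with
  | C a =>
    refine ⟨a ^ 2, hl.map_one.mono fun L h1 => ?_⟩
    rw [← map_pow, ← mul_one (C _), ← smul_eq_C_mul, map_smul, h1, smul_eq_mul, mul_one]
  | add p q hp hq =>
    obtain ⟨B₁, hB₁⟩ := hp
    obtain ⟨B₂, hB₂⟩ := hq
    refine ⟨2 * B₁ + 2 * B₂, ?_⟩
    filter_upwards [hB₁, hB₂, hl.sq_nonneg (p - q)] with L h₁ h₂ hsub
    have parallelogram : L ((p + q) ^ 2) + L ((p - q) ^ 2) = 2 * L (p ^ 2) + 2 * L (q ^ 2) := by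
      rw [← map_add, show (p + q) ^ 2 + (p - q) ^ 2 = (p ^ 2 + p ^ 2) + (q ^ 2 + q ^ 2) by ring]
      simp only [map_add]
      ring
    linarith
  | mul_X p i hp =>
    obtain ⟨B, hB⟩ := hp
    refine ⟨R ^ 2 * B, ?_⟩
    filter_upwards [hB, hl.X_mul_sq_le i p] with L h hX
    rw [mul_comm]
    exact hX.trans (mul_le_mul_of_nonneg_left h (by positivity))

lemma exists_abs_map_le (hl : IsAsymptoticState H R l) (q : MvPolynomial σ ℝ) :
    ∃ B : ℝ, ∀ᶠ L in l, |L q| ≤ B := by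
  obtain ⟨B, hB⟩ := hl.exists_map_sq_le q
  refine ⟨1 + B, ?_⟩
  filter_upwards [hB, hl.map_one, hl.sq_nonneg q, hl.sq_nonneg (q + 1), hl.sq_nonneg (q - 1)]
    with L hB h1 hq hadd hsub
  rw [show (q + 1) ^ 2 = q ^ 2 + (q + q) + 1 by ring, map_add, map_add, map_add, h1] at hadd
  rw [show (q - 1) ^ 2 = q ^ 2 - (q + q) + 1 by ring, map_add, map_sub, map_add, h1] at hsub
  exact abs_le.2 ⟨by linarith, by linarith⟩

lemma exists_isState_tendsto {U : Ultrafilter (MvPolynomial σ ℝ →ₗ[ℝ] ℝ)}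
    (hU : IsAsymptoticState H R U) : ∃ Λ : MvPolynomial σ ℝ →ₗ[ℝ] ℝ, IsState H R Λ ∧
      ∀ q, Tendsto (fun L : MvPolynomial σ ℝ →ₗ[ℝ] ℝ => L q) U (𝓝 (Λ q)) := by
  have hlim : ∀ q, ∃ x : ℝ, Tendsto (fun L : MvPolynomial σ ℝ →ₗ[ℝ] ℝ => L q) U (𝓝 x) := by
    intro q
    obtain ⟨B, hB⟩ := hU.exists_abs_map_le q
    obtain ⟨x, -, hx⟩ := (isCompact_Icc (a := -B) (b := B)).ultrafilter_le_nhds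
      (U.map fun L => L q) (le_principal_iff.2 (hB.mono fun L => abs_le.1))
    exact ⟨x, hx⟩
  choose lim hlim using hlim
  let Λ : MvPolynomial σ ℝ →ₗ[ℝ] ℝ := linearMapOfTendsto lim (id : (MvPolynomial σ ℝ →ₗ[ℝ] ℝ) → _)
    (tendsto_pi_nhds.2 hlim)
  have hΛ : ∀ q, Tendsto (fun L : MvPolynomial σ ℝ →ₗ[ℝ] ℝ => L q) U (𝓝 (Λ q)) := hlim
  exact ⟨Λ,
    { map_one := tendsto_nhds_unique_of_eventuallyEq (hΛ 1) tendsto_const_nhds hU.map_one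
      isPSD := fun q => ge_of_tendsto (hΛ _) (hU.sq_nonneg q)
      isPSD_localize := fun j q => ge_of_tendsto (hΛ _) (hU.localize_sq_nonneg j q)
      isMulBounded_X := fun i q =>
        le_of_tendsto_of_tendsto (hΛ _) ((hΛ _).const_mul _) (hU.X_mul_sq_le i q) }, hΛ⟩

end IsAsymptoticState

lemma isCompact_stateSpace : IsCompact (stateSpace H R) := by
  rw [isCompact_iff_ultrafilter_le_nhds]
  intro V hV
  have hrange : range (fun L : MvPolynomial σ ℝ →ₗ[ℝ] ℝ => ⇑L) ∈ V :=
    mem_of_superset (le_principal_iff.1 hV) (image_subset_range _ _)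
  let U := V.comap DFunLike.coe_injective hrange
  have hU : (U : Filter (MvPolynomial σ ℝ →ₗ[ℝ] ℝ)) ≤ 𝓟 {L | IsState H R L} :=
    le_principal_iff.2 ((Ultrafilter.mem_comap _ _ _).2 (le_principal_iff.1 hV))
  obtain ⟨Λ, hΛ, hlim⟩ := (IsAsymptoticState.principal.mono hU).exists_isState_tendsto
  refine ⟨Λ, ⟨Λ, hΛ, rfl⟩, ?_⟩
  rw [← map_comap_of_mem hrange]
  exact tendsto_pi_nhds.2 hlim

lemma eventually_map_sumSq_mul_sq_nonneg {g s : MvPolynomial σ ℝ} (hs : IsSumSq s)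
    (hg : ∀ q, ∀ᶠ L in l, 0 ≤ L (g * q ^ 2)) (q : MvPolynomial σ ℝ) :
    ∀ᶠ L in l, 0 ≤ L (s * g * q ^ 2) := by
  induction hs with
  | zero => simp
  | @sq_add a s _ ih =>
    filter_upwards [ih, hg (a * q)] with L h₁ h₂
    rw [show (a * a + s) * g * q ^ 2 = g * (a * q) ^ 2 + s * g * q ^ 2 by ring, map_add]
    exact add_nonneg h₂ h₁

lemma eventually_X_mul_sq_le_of_archimedean [Fintype σ] [Fintype ι]
    (hsq : ∀ q, ∀ᶠ L in l, 0 ≤ L (q ^ 2)) (hH : ∀ j q, ∀ᶠ L in l, 0 ≤ L (H j * q ^ 2))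
    {N : ℝ} {σ₀ : MvPolynomial σ ℝ} {τ : ι → MvPolynomial σ ℝ} (hσ₀ : IsSumSq σ₀)
    (hτ : ∀ j, IsSumSq (τ j)) (harch : C N - ∑ i : σ, X i ^ 2 = σ₀ + ∑ j, τ j * H j)
    (i : σ) (q : MvPolynomial σ ℝ) :
    ∀ᶠ L in l, L ((X i * q) ^ 2) ≤ (|N| + 1) ^ 2 * L (q ^ 2) := by
  have hσ₀q := eventually_map_sumSq_mul_sq_nonneg (g := 1) hσ₀ (by simpa only [one_mul] using hsq) q
  have hτq := eventually_all.2 fun j => eventually_map_sumSq_mul_sq_nonneg (hτ j) (hH j) q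
  have hXq := eventually_all.2 fun k => hsq (X k * q)
  filter_upwards [hσ₀q, hτq, hXq, hsq q] with L hσ₀q hτq hXq hq
  have hsplit : N * L (q ^ 2) =
      ∑ k, L ((X k * q) ^ 2) + (L (σ₀ * 1 * q ^ 2) + ∑ j, L (τ j * H j * q ^ 2)) := by
    rw [← smul_eq_mul, ← map_smul, ← map_sum, ← map_sum, ← map_add, ← map_add, smul_eq_C_mul]
    congr 1
    simp only [mul_pow, ← Finset.sum_mul]
    linear_combination q ^ 2 * harch
  calc L ((X i * q) ^ 2) ≤ ∑ k, L ((X k * q) ^ 2) :=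
        Finset.single_le_sum (f := fun k => L ((X k * q) ^ 2)) (fun k _ => hXq k)
          (Finset.mem_univ i)
    _ ≤ N * L (q ^ 2) := by
        rw [hsplit]
        exact le_add_of_nonneg_right (add_nonneg hσ₀q (Finset.sum_nonneg fun j _ => hτq j))
    _ ≤ (|N| + 1) ^ 2 * L (q ^ 2) :=
        mul_le_mul_of_nonneg_right (by nlinarith [le_abs_self N, abs_nonneg N]) hq

end AsymptoticState

section RepresentingMeasure

variable {E α : Type*} [TopologicalSpace E] [MeasurableSpace E] [BorelSpace E]

/-- The functions on `α` obtained by integrating the family `e` against a probability measure. -/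
def integralFamily (e : α → C(E, ℝ)) : Set (α → ℝ) :=
  range fun (μ : ProbabilityMeasure E) a => ∫ x, e a x ∂(μ : Measure E)

lemma convex_integralFamily [CompactSpace E] (e : α → C(E, ℝ)) : Convex ℝ (integralFamily e) := by
  rintro _ ⟨μ, rfl⟩ _ ⟨ν, rfl⟩ s t hs ht hst
  refine ⟨⟨ENNReal.ofReal s • (μ : Measure E) + ENNReal.ofReal t • (ν : Measure E), ⟨?_⟩⟩, ?_⟩
  · simp [← ENNReal.ofReal_add hs ht, hst]
  · have hint : ∀ (ρ : ProbabilityMeasure E) a, Integrable (e a) (ρ : Measure E) := fun ρ a =>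
      (BoundedContinuousFunction.mkOfCompact (e a)).integrable (ρ : Measure E)
    ext a
    simp only [ProbabilityMeasure.coe_mk, Pi.add_apply, Pi.smul_apply, smul_eq_mul]
    rw [integral_add_measure ((hint μ a).smul_measure ENNReal.ofReal_ne_top)
      ((hint ν a).smul_measure ENNReal.ofReal_ne_top), integral_smul_measure,
      integral_smul_measure, ENNReal.toReal_ofReal hs, ENNReal.toReal_ofReal ht, smul_eq_mul,
      smul_eq_mul]

lemma isCompact_integralFamily [CompactSpace E] [T2Space E]
    (e : α → C(E, ℝ)) : IsCompact (integralFamily e) :=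
  isCompact_range (continuous_pi fun a =>
    ProbabilityMeasure.continuous_integral_boundedContinuousFunction
      (BoundedContinuousFunction.mkOfCompact (e a)))

lemma mem_integralFamily_apply (e : α → C(E, ℝ)) (x : E) : (fun a => e a x) ∈ integralFamily e :=
  ⟨⟨Measure.dirac x, inferInstance⟩, funext fun a =>
    integral_dirac' _ _ (e a).continuous.stronglyMeasurable⟩

end RepresentingMeasure

section StateRepresentation

variable {σ ι : Type*} [Countable σ] {H : ι → MvPolynomial σ ℝ} {R : ℝ}
  {L : MvPolynomial σ ℝ →ₗ[ℝ] ℝ}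

lemma IsState.exists_probabilityMeasure (hL : IsState H R L) (hR : 0 < R) :
    ∃ μ : ProbabilityMeasure (boxFeasibleSet H R),
      ∀ q, L q = ∫ c : boxFeasibleSet H R, eval c.1 q ∂(μ : Measure (boxFeasibleSet H R)) := by
  have := isCompact_iff_compactSpace.1 (isCompact_boxFeasibleSet (H := H) (R := R))
  let e : MvPolynomial σ ℝ → C(boxFeasibleSet H R, ℝ) := fun q =>
    ⟨fun c => eval c.1 q, (continuous_eval q).comp continuous_subtype_val⟩
  have hsub : stateSpace H R ⊆ integralFamily e := by
    rw [← closure_convexHull_extremePoints isCompact_stateSpace convex_stateSpace]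
    refine closure_minimal (convexHull_min ?_ (convex_integralFamily e))
      (isCompact_integralFamily e).isClosed
    intro F hF
    obtain ⟨c, hc, rfl⟩ := exists_eq_eval_of_mem_extremePoints hR hF
    exact mem_integralFamily_apply e ⟨c, hc⟩
  obtain ⟨μ, hμ⟩ := hsub ⟨L, hL, rfl⟩
  exact ⟨μ, fun q => (congrFun hμ q).symm⟩

end StateRepresentation

section CompactlySupportedMeasure

section TopologicalSpace

variable {E : Type*} [TopologicalSpace E] [MeasurableSpace E] [OpensMeasurableSpace E]
  {ν : Measure E} [IsFiniteMeasure ν] {K : Set E} {f g : E → ℝ}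

lemma integrable_of_continuous_of_ae_mem_isCompact (hK : IsCompact K) (hν : ∀ᵐ w ∂ν, w ∈ K)
    (hf : Continuous f) : Integrable f ν := by
  obtain ⟨B, hB⟩ := hK.exists_bound_of_continuousOn hf.continuousOn
  exact Integrable.of_bound hf.measurable.aestronglyMeasurable B (hν.mono hB)

lemma abs_integral_sub_le_of_ae_mem (hK : IsCompact K) (hν : ∀ᵐ w ∂ν, w ∈ K)
    (hf : Continuous f) (hg : Continuous g) {ε : ℝ} (hfg : ∀ w ∈ K, |f w - g w| < ε) :
    |∫ w, f w ∂ν - ∫ w, g w ∂ν| ≤ ε * ν.real univ := by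
  rw [← integral_sub (integrable_of_continuous_of_ae_mem_isCompact hK hν hf)
    (integrable_of_continuous_of_ae_mem_isCompact hK hν hg)]
  exact norm_integral_le_of_norm_le_const (f := fun w => f w - g w)
    (hν.mono fun w hw => (hfg w hw).le)

end TopologicalSpace

variable {σ : Type*} {K : Set (σ → ℝ)}

lemma exists_eval_near_of_isCompact (hK : IsCompact K) {u : (σ → ℝ) → ℝ} (hu : Continuous u)
    {ε : ℝ} (hε : 0 < ε) : ∃ g : MvPolynomial σ ℝ, ∀ c ∈ K, |eval c g - u c| < ε := by
  let coord : σ → C(σ → ℝ, ℝ) := fun i => ⟨fun c => c i, continuous_apply i⟩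
  have heval : ∀ (g : MvPolynomial σ ℝ) c, aeval coord g c = eval c g := fun g c => by
    induction g using MvPolynomial.induction_on with
    | C a => simp
    | add p q hp hq => rw [map_add, map_add, ContinuousMap.add_apply, hp, hq]
    | mul_X p i hp => simp [hp, coord]
  have hsep : (aeval coord : MvPolynomial σ ℝ →ₐ[ℝ] C(σ → ℝ, ℝ)).range.SeparatesPoints := by
    intro c d hcd
    obtain ⟨i, hi⟩ := Function.ne_iff.1 hcd
    exact ⟨_, ⟨_, ⟨X i, rfl⟩, rfl⟩, by simpa [coord] using hi⟩
  obtain ⟨_, ⟨g, rfl⟩, hg⟩ :=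
    ContinuousMap.exists_mem_subalgebra_near_continuous_of_isCompact_of_separatesPoints hsep
      ⟨u, hu⟩ hK hε
  exact ⟨g, fun c hc => by simpa [← heval] using hg c hc⟩

variable {μ ν : Measure (σ → ℝ)} [IsFiniteMeasure μ] [IsFiniteMeasure ν]

lemma ext_of_forall_integral_eval_eq [Countable σ] (hK : IsCompact K) (hμ : ∀ᵐ c ∂μ, c ∈ K)
    (hν : ∀ᵐ c ∂ν, c ∈ K)
    (h : ∀ g : MvPolynomial σ ℝ, ∫ c, eval c g ∂μ = ∫ c, eval c g ∂ν) : μ = ν := by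
  refine ext_of_forall_integral_eq_of_IsFiniteMeasure fun u => ?_
  have hclose : ∀ ε > 0,
      |∫ c, u c ∂μ - ∫ c, u c ∂ν| ≤ ε * (μ.real univ + ν.real univ) := by
    intro ε hε
    obtain ⟨g, hg⟩ := exists_eval_near_of_isCompact hK u.continuous hε
    have hgμ := abs_integral_sub_le_of_ae_mem hK hμ (continuous_eval g) u.continuous hg
    have hgν := abs_integral_sub_le_of_ae_mem hK hν (continuous_eval g) u.continuous hg
    rw [h g, abs_sub_comm] at hgμ
    rw [mul_add]
    exact (abs_sub_le _ _ _).trans (add_le_add hgμ hgν)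
  have hlim : Tendsto (fun ε : ℝ => ε * (μ.real univ + ν.real univ)) (𝓝[>] 0) (𝓝 0) :=
    ((continuous_id.mul continuous_const).tendsto' 0 0 (zero_mul _)).mono_left nhdsWithin_le_nhds
  exact sub_eq_zero.1 (abs_nonpos_iff.1
    (ge_of_tendsto hlim (eventually_mem_nhdsWithin.mono hclose)))

lemma ext_of_forall_integral_prod_pow_eq [Fintype σ] (hK : IsCompact K) (hμ : ∀ᵐ c ∂μ, c ∈ K)
    (hν : ∀ᵐ c ∂ν, c ∈ K)
    (h : ∀ β : σ → ℕ, ∫ c, ∏ i, c i ^ β i ∂μ = ∫ c, ∏ i, c i ^ β i ∂ν) : μ = ν := by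
  refine ext_of_forall_integral_eval_eq hK hμ hν fun g => ?_
  induction g using MvPolynomial.induction_on' with
  | monomial d a =>
    simp only [eval_monomial, Finsupp.prod_fintype _ _ fun _ => pow_zero _, integral_const_mul, h]
  | add p q hp hq =>
    have hint := fun {ρ : Measure (σ → ℝ)} [IsFiniteMeasure ρ] (hρ : ∀ᵐ c ∂ρ, c ∈ K) r =>
      integrable_of_continuous_of_ae_mem_isCompact hK hρ (continuous_eval r)
    simp only [map_add]
    rw [integral_add (hint hμ p) (hint hμ q), integral_add (hint hν p) (hint hν q), hp, hq]

end CompactlySupportedMeasure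

section StrictMinimizer

variable {A B : Type*} {K : Set (A × B)} {F : A × B → ℝ} {x x' : A} {y : B}

/-- `x` is the unique minimizer of `F (·, y)` on the slice of `K` over the parameter `y`. -/
def IsStrictMinimizer (K : Set (A × B)) (F : A × B → ℝ) (x : A) (y : B) : Prop :=
  (x, y) ∈ K ∧ ∀ x', (x', y) ∈ K → x' ≠ x → F (x, y) < F (x', y)

lemma IsStrictMinimizer.eq_of_le (h : IsStrictMinimizer K F x y) (hx' : (x', y) ∈ K)
    (hle : F (x', y) ≤ F (x, y)) : x' = x :=
  not_imp_comm.1 (h.2 x' hx') hle.not_gt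

lemma IsStrictMinimizer.le (h : IsStrictMinimizer K F x y) (hx' : (x', y) ∈ K) :
    F (x, y) ≤ F (x', y) :=
  le_of_not_gt fun hlt => hlt.ne (by rw [h.eq_of_le hx' hlt.le])

variable [TopologicalSpace A] [TopologicalSpace B]

lemma isStrictMinimizer_of_argmin_eq_singleton (hK : IsCompact K) (hF : Continuous F)
    (h : {x' | (x', y) ∈ K ∧ F (x', y) = sInf ((fun x' => F (x', y)) '' {x' | (x', y) ∈ K})} =
      {x}) : IsStrictMinimizer K F x y := by
  set J := sInf ((fun x' => F (x', y)) '' {x' | (x', y) ∈ K})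
  obtain ⟨hxK, hxJ⟩ : (x, y) ∈ K ∧ F (x, y) = J := h.ge rfl
  have hbdd : BddBelow ((fun x' => F (x', y)) '' {x' | (x', y) ∈ K}) := by
    refine (hK.bddBelow_image hF.continuousOn).mono ?_
    rintro _ ⟨x', hx', rfl⟩
    exact mem_image_of_mem F hx'
  refine ⟨hxK, fun x' hx' hne => lt_of_le_of_ne ?_ fun heq => hne (h.le ⟨hx', heq ▸ hxJ⟩)⟩
  exact hxJ.trans_le (csInf_le hbdd ⟨x', hx', rfl⟩)

variable [MeasurableSpace B] [BorelSpace B] {xs : B → A}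

lemma aemeasurable_value_of_isStrictMinimizer [T2Space B] {φ : Measure B} (hK : IsCompact K)
    (hF : Continuous F) (hmin : ∀ᵐ y ∂φ, IsStrictMinimizer K F (xs y) y) :
    AEMeasurable (fun y => F (xs y, y)) φ := by
  have hnull : @Measurable (NullMeasurableSpace B φ) ℝ _ _ fun y => F (xs y, y) := by
    refine measurable_of_Iic fun c => ?_
    have hproj : MeasurableSet (Prod.snd '' (K ∩ {w | F w ≤ c})) :=
      ((hK.inter_right (isClosed_le hF continuous_const)).image continuous_snd).measurableSet
    refine hproj.nullMeasurableSet.congr ?_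
    filter_upwards [hmin] with y hy
    refine propext ⟨?_, fun hle => ⟨(xs y, y), ⟨hy.1, hle⟩, rfl⟩⟩
    rintro ⟨⟨x, _⟩, ⟨hxK, hle⟩, rfl⟩
    exact (hy.le hxK).trans hle
  exact NullMeasurable.aemeasurable fun _ hs => hnull hs

variable [MeasurableSpace A] [BorelSpace A] [PolishSpace A] [PolishSpace B]

/-- Up to null sets, the graph of the minimizer is the Borel set where `F` is at most the value
function; projecting its measurable pieces, which is injective, stays within Borel sets by the
Lusin–Souslin theorem. -/
lemma aemeasurable_of_isStrictMinimizer {φ : Measure B} (hK : IsCompact K) (hF : Continuous F)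
    (hmin : ∀ᵐ y ∂φ, IsStrictMinimizer K F (xs y) y) : AEMeasurable xs φ := by
  have hvalue := aemeasurable_value_of_isStrictMinimizer hK hF hmin
  obtain ⟨G, hGφ, hG, hGmin⟩ := (hmin.and hvalue.ae_eq_mk).exists_measurable_mem
  set v := hvalue.mk
  refine NullMeasurable.aemeasurable fun S hS => ?_
  set graph : Set (A × B) := K ∩ {w | F w ≤ v w.2} ∩ Prod.snd ⁻¹' G
  have hgraph : ∀ w ∈ graph, w.1 = xs w.2 := by
    rintro ⟨x, y⟩ ⟨⟨hxK, hle⟩, hy⟩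
    exact (hGmin y hy).1.eq_of_le hxK (hle.trans (hGmin y hy).2.ge)
  have hmeas : MeasurableSet (graph ∩ Prod.fst ⁻¹' S) :=
    ((hK.measurableSet.inter (measurableSet_le hF.measurable
      (hvalue.measurable_mk.comp measurable_snd))).inter (measurable_snd hG)).inter
      (measurable_fst hS)
  have hinj : InjOn Prod.snd (graph ∩ Prod.fst ⁻¹' S) := fun w hw w' hw' h =>
    Prod.ext (by rw [hgraph w hw.1, hgraph w' hw'.1, h]) h
  refine (hmeas.image_of_measurable_injOn measurable_snd hinj).nullMeasurableSet.congr ?_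
  filter_upwards [hGφ] with y hy
  refine propext ⟨?_, fun hyS => ?_⟩
  · rintro ⟨w, ⟨hw, hwS⟩, rfl⟩
    change xs w.2 ∈ S
    rwa [← hgraph w hw]
  · exact ⟨(xs y, y), ⟨⟨⟨(hGmin y hy).1.1, (hGmin y hy).2.le⟩, hy⟩, hyS⟩, rfl⟩

lemma aemeasurable_graph_of_isStrictMinimizer {φ : Measure B} (hK : IsCompact K)
    (hF : Continuous F) (hmin : ∀ᵐ y ∂φ, IsStrictMinimizer K F (xs y) y) :
    AEMeasurable (fun y => (xs y, y)) φ :=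
  (aemeasurable_of_isStrictMinimizer hK hF hmin).prodMk aemeasurable_id

variable {ν : Measure (A × B)} [IsFiniteMeasure ν]

lemma ae_fst_eq_of_integral_le (hK : IsCompact K) (hF : Continuous F) (hνK : ∀ᵐ w ∂ν, w ∈ K)
    (hmin : ∀ᵐ y ∂ν.snd, IsStrictMinimizer K F (xs y) y)
    (hle : ∫ w, F w ∂ν ≤ ∫ y, F (xs y, y) ∂ν.snd) : ∀ᵐ w ∂ν, w.1 = xs w.2 := by
  have hgraph := aemeasurable_graph_of_isStrictMinimizer hK hF hmin
  have hmin' : ∀ᵐ w ∂ν, IsStrictMinimizer K F (xs w.2) w.2 :=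
    ae_of_ae_map measurable_snd.aemeasurable hmin
  have hFint := integrable_of_continuous_of_ae_mem_isCompact hK hνK hF
  have hvalue : AEStronglyMeasurable (fun y => F (xs y, y)) ν.snd :=
    (hF.measurable.comp_aemeasurable hgraph).aestronglyMeasurable
  have hvalueInt : Integrable (fun w : A × B => F (xs w.2, w.2)) ν := by
    obtain ⟨C, hC⟩ := hK.exists_bound_of_continuousOn hF.continuousOn
    exact Integrable.of_bound (hvalue.comp_measurable measurable_snd) C
      (hmin'.mono fun w hw => hC _ hw.1)
  have hgap : 0 ≤ᵐ[ν] fun w => F w - F (xs w.2, w.2) := by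
    filter_upwards [hνK, hmin'] with w hw hmin using sub_nonneg.2 (hmin.le hw)
  have hgapInt : ∫ w, (F w - F (xs w.2, w.2)) ∂ν = 0 := by
    refine le_antisymm ?_ (integral_nonneg_of_ae hgap)
    rw [Measure.snd, integral_map measurable_snd.aemeasurable hvalue] at hle
    rwa [integral_sub hFint hvalueInt, sub_nonpos]
  filter_upwards [(integral_eq_zero_iff_of_nonneg_ae hgap (hFint.sub hvalueInt)).1 hgapInt, hνK,
    hmin'] with w hw hwK hmin
  exact hmin.eq_of_le hwK (sub_nonpos.1 hw.le)

lemma eq_map_graph_of_integral_le (hK : IsCompact K) (hF : Continuous F) (hνK : ∀ᵐ w ∂ν, w ∈ K)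
    (hmin : ∀ᵐ y ∂ν.snd, IsStrictMinimizer K F (xs y) y)
    (hle : ∫ w, F w ∂ν ≤ ∫ y, F (xs y, y) ∂ν.snd) : ν = ν.snd.map fun y => (xs y, y) := by
  have hgraph := aemeasurable_graph_of_isStrictMinimizer hK hF hmin
  have hid : (fun y => (xs y, y)) ∘ Prod.snd =ᵐ[ν] id := by
    filter_upwards [ae_fst_eq_of_integral_le hK hF hνK hmin hle] with w hw
    exact Prod.ext hw.symm rfl
  rw [Measure.snd, AEMeasurable.map_map_of_aemeasurable hgraph measurable_snd.aemeasurable,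
    Measure.map_congr hid, Measure.map_id]

end StrictMinimizer

section Relaxation

variable {n p : ℕ} {ι : Type*} {H : ι → MvPolynomial (Fin n ⊕ Fin p) ℝ} {γ : (Fin p → ℕ) → ℝ}

/-- `Lz` as a linear functional. -/
def rieszFunctional (z : (Fin n → ℕ) → (Fin p → ℕ) → ℝ) :
    MvPolynomial (Fin n ⊕ Fin p) ℝ →ₗ[ℝ] ℝ :=
  (basisMonomials (Fin n ⊕ Fin p) ℝ).constr ℝ fun d => z (d ∘ Sum.inl) (d ∘ Sum.inr)

lemma rieszFunctional_monomial (z : (Fin n → ℕ) → (Fin p → ℕ) → ℝ) (d : Fin n ⊕ Fin p →₀ ℕ)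
    (c : ℝ) : rieszFunctional z (monomial d c) = c * z (d ∘ Sum.inl) (d ∘ Sum.inr) := by
  have hbasis : monomial d c = c • basisMonomials (Fin n ⊕ Fin p) ℝ d := by
    rw [coe_basisMonomials, smul_monomial, smul_eq_mul, mul_one]
  rw [hbasis, map_smul, rieszFunctional, Module.Basis.constr_basis, smul_eq_mul]

lemma Lz_eq_rieszFunctional (z : (Fin n → ℕ) → (Fin p → ℕ) → ℝ)
    (q : MvPolynomial (Fin n ⊕ Fin p) ℝ) : Lz n p z q = rieszFunctional z q := by
  conv_rhs => rw [q.as_sum, map_sum]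
  exact Finset.sum_congr rfl fun d _ => (rieszFunctional_monomial z d _).symm

lemma rieszFunctional_rename_inr (z : (Fin n → ℕ) → (Fin p → ℕ) → ℝ) (β : Fin p →₀ ℕ) :
    rieszFunctional z (rename Sum.inr (monomial β 1)) = z 0 β := by
  rw [rename_monomial, rieszFunctional_monomial, one_mul]
  congr 1
  · exact funext fun i => Finsupp.mapDomain_of_notMem_range _ _ (by simp)
  · exact funext fun l => Finsupp.mapDomain_apply Sum.inr_injective β l

lemma Lz_X_inl (z : (Fin n → ℕ) → (Fin p → ℕ) → ℝ) (k : Fin n) :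
    Lz n p z (X (Sum.inl k)) = z (fun j => if j = k then 1 else 0) fun _ => 0 := by
  rw [Lz_eq_rieszFunctional, X, rieszFunctional_monomial, one_mul]
  congr 1
  · ext j
    simp [Finsupp.single_apply, eq_comm]
  · ext l
    simp

lemma degOK_of_totalDegree_le {i : ℕ} {q : MvPolynomial (Fin n ⊕ Fin p) ℝ}
    (h : q.totalDegree ≤ i) : DegOK n p i q := by
  intro d hd
  have hdeg := (le_totalDegree hd).trans h
  rw [Finsupp.sum_fintype _ _ fun _ => rfl, Fintype.sum_sum_type] at hdeg
  exact ⟨le_of_add_le_left hdeg, le_of_add_le_right hdeg⟩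

section FeasibleFilter

variable [Fintype ι]

/-- The filter of functionals `L_z` with `z` feasible for the `i`-th relaxation, as `i → ∞`. -/
def feasibleFilter (H : ι → MvPolynomial (Fin n ⊕ Fin p) ℝ) (γ : (Fin p → ℕ) → ℝ) :
    Filter (MvPolynomial (Fin n ⊕ Fin p) ℝ →ₗ[ℝ] ℝ) :=
  map (fun iz : ℕ × ((Fin n → ℕ) → (Fin p → ℕ) → ℝ) => rieszFunctional iz.2)
    (comap Prod.fst atTop ⊓ 𝓟 {iz | RelaxFeasible n p H γ iz.1 iz.2})

lemma eventually_feasibleFilter_iff {P : (MvPolynomial (Fin n ⊕ Fin p) ℝ →ₗ[ℝ] ℝ) → Prop} :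
    (∀ᶠ L in feasibleFilter H γ, P L) ↔
      ∀ᶠ i in atTop, ∀ z, RelaxFeasible n p H γ i z → P (rieszFunctional z) := by
  rw [feasibleFilter, eventually_map, eventually_inf_principal, eventually_comap]
  exact eventually_congr (.of_forall fun i =>
    ⟨fun h z => h (i, z) rfl, by rintro h ⟨_, z⟩ rfl; exact h z⟩)

lemma tendsto_rieszFunctional_feasibleFilter {z : ℕ → (Fin n → ℕ) → (Fin p → ℕ) → ℝ}
    (hz : ∀ᶠ i in atTop, RelaxFeasible n p H γ i (z i)) :
    Tendsto (fun i => rieszFunctional (z i)) atTop (feasibleFilter H γ) := fun _ hP =>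
  (eventually_feasibleFilter_iff.1 hP).mp (hz.mono fun i hi h => h (z i) hi)

lemma eventually_feasibleFilter_sq_nonneg (q : MvPolynomial (Fin n ⊕ Fin p) ℝ) :
    ∀ᶠ L in feasibleFilter H γ, 0 ≤ L (q ^ 2) := by
  rw [eventually_feasibleFilter_iff]
  filter_upwards [eventually_ge_atTop q.totalDegree] with i hi z hz
  rw [← Lz_eq_rieszFunctional]
  exact hz.1 q (degOK_of_totalDegree_le hi)

lemma eventually_feasibleFilter_mul_sq_nonneg (j : ι) (q : MvPolynomial (Fin n ⊕ Fin p) ℝ) :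
    ∀ᶠ L in feasibleFilter H γ, 0 ≤ L (H j * q ^ 2) := by
  rw [eventually_feasibleFilter_iff]
  filter_upwards [eventually_ge_atTop (q.totalDegree + halfDeg (H j))] with i hi z hz
  rw [← Lz_eq_rieszFunctional]
  exact hz.2.1 j q (degOK_of_totalDegree_le (Nat.le_sub_of_add_le hi))

lemma eventually_feasibleFilter_rename_inr (β : Fin p →₀ ℕ) :
    ∀ᶠ L in feasibleFilter H γ, L (rename Sum.inr (monomial β 1)) = γ β := by
  rw [eventually_feasibleFilter_iff]
  filter_upwards [eventually_ge_atTop (∑ l, β l)] with i hi z hz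
  rw [rieszFunctional_rename_inr]
  exact hz.2.2 β (by omega)

lemma exists_isAsymptoticState_feasibleFilter (harch : ArchimedeanQM n p H) (hγ : γ 0 = 1) :
    ∃ R > 0, IsAsymptoticState H R (feasibleFilter H γ) := by
  obtain ⟨N, σ₀, τ, hσ₀, hτ, hN⟩ := harch
  refine ⟨|N| + 1, by positivity, ?_, eventually_feasibleFilter_sq_nonneg,
    eventually_feasibleFilter_mul_sq_nonneg,
    eventually_X_mul_sq_le_of_archimedean eventually_feasibleFilter_sq_nonneg
      eventually_feasibleFilter_mul_sq_nonneg hσ₀ hτ hN⟩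
  simpa [hγ] using eventually_feasibleFilter_rename_inr (H := H) (γ := γ) 0

end FeasibleFilter

section FeasibleSet

lemma continuous_evalXY (q : MvPolynomial (Fin n ⊕ Fin p) ℝ) : Continuous (evalXY n p q) :=
  (continuous_eval q).comp <| continuous_pi <| Sum.rec
    (fun i => (continuous_apply i).comp continuous_fst)
    (fun l => (continuous_apply l).comp continuous_snd)

lemma evalXY_rename_inr (q : MvPolynomial (Fin p) ℝ) (w : (Fin n → ℝ) × (Fin p → ℝ)) :
    evalXY n p (rename Sum.inr q) w = eval w.2 q := by
  rw [evalXY, eval_rename, Sum.elim_comp_inr]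

lemma evalXY_monomial (d : Fin n ⊕ Fin p →₀ ℕ) (c : ℝ) (w : (Fin n → ℝ) × (Fin p → ℝ)) :
    evalXY n p (monomial d c) w =
      c * ((∏ i, w.1 i ^ d (Sum.inl i)) * ∏ l, w.2 l ^ d (Sum.inr l)) := by
  rw [evalXY, eval_monomial, Finsupp.prod_fintype _ _ fun _ => pow_zero _,
    Fintype.prod_sum_type]
  rfl

/-- The points of `ℝ^n × ℝ^p` at which all the constraints `H` are nonnegative. -/
def feasibleSet (H : ι → MvPolynomial (Fin n ⊕ Fin p) ℝ) : Set ((Fin n → ℝ) × (Fin p → ℝ)) :=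
  {w | ∀ j, 0 ≤ evalXY n p (H j) w}

lemma feasibleSet_sumElim_rename_inr {ι₁ ι₂ : Type*}
    (hx : ι₁ → MvPolynomial (Fin n ⊕ Fin p) ℝ) (hy : ι₂ → MvPolynomial (Fin p) ℝ) :
    feasibleSet (Sum.elim hx fun k => rename Sum.inr (hy k)) =
      {w | (∀ k, 0 ≤ eval w.2 (hy k)) ∧ ∀ j, 0 ≤ evalXY n p (hx j) w} := by
  ext w
  simp [feasibleSet, evalXY_rename_inr, and_comm]

lemma eq_zero_or_one_of_mem_feasibleSet {k : Fin n} {j₁ j₂ : ι}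
    (hj₁ : H j₁ = X (Sum.inl k) ^ 2 - X (Sum.inl k))
    (hj₂ : H j₂ = X (Sum.inl k) - X (Sum.inl k) ^ 2) {w : (Fin n → ℝ) × (Fin p → ℝ)}
    (hw : w ∈ feasibleSet H) : w.1 k = 0 ∨ w.1 k = 1 := by
  have h₁ := hw j₁
  have h₂ := hw j₂
  simp only [hj₁, hj₂, evalXY, map_sub, map_pow, eval_X, Sum.elim_inl] at h₁ h₂
  exact IsIdempotentElem.iff_eq_zero_or_one.1 (by rw [IsIdempotentElem]; linarith)

lemma isClosed_feasibleSet : IsClosed (feasibleSet H) := by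
  simp only [feasibleSet, ofPred_forall]
  exact isClosed_iInter fun j => isClosed_le continuous_const (continuous_evalXY (H j))

lemma IsState.exists_measure_feasibleSet {L : MvPolynomial (Fin n ⊕ Fin p) ℝ →ₗ[ℝ] ℝ} {R : ℝ}
    (hL : IsState H R L) (hR : 0 < R) :
    ∃ ν : Measure ((Fin n → ℝ) × (Fin p → ℝ)), IsProbabilityMeasure ν ∧
      (∀ᵐ w ∂ν, w ∈ feasibleSet H) ∧ ∀ q, L q = ∫ w, evalXY n p q w ∂ν := by
  obtain ⟨μ, hμ⟩ := hL.exists_probabilityMeasure hR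
  let split : boxFeasibleSet H R → (Fin n → ℝ) × (Fin p → ℝ) :=
    fun c => (c.1 ∘ Sum.inl, c.1 ∘ Sum.inr)
  have hsplit : Measurable split := (MeasurableEquiv.sumPiEquivProdPi
    fun _ : Fin n ⊕ Fin p => ℝ).measurable.comp measurable_subtype_coe
  have heval : ∀ q c, evalXY n p q (split c) = eval c.1 q := fun q c => by
    rw [evalXY, Sum.elim_comp_inl_inr]
  refine ⟨(μ : Measure _).map split, Measure.isProbabilityMeasure_map hsplit.aemeasurable, ?_,
    fun q => ?_⟩
  · refine (ae_map_iff hsplit.aemeasurable isClosed_feasibleSet.measurableSet).2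
      (ae_of_all _ fun c j => ?_)
    rw [heval]
    exact c.2.2 j
  · rw [integral_map hsplit.aemeasurable (continuous_evalXY q).measurable.aestronglyMeasurable, hμ]
    simp only [heval]

end FeasibleSet

section Moments

variable {ν : Measure ((Fin n → ℝ) × (Fin p → ℝ))}

/-- The doubly indexed sequence of moments `∫ x^α y^β dν`. -/
def momentSequence (ν : Measure ((Fin n → ℝ) × (Fin p → ℝ))) :
    (Fin n → ℕ) → (Fin p → ℕ) → ℝ :=
  fun α β => ∫ w, (∏ i, w.1 i ^ α i) * ∏ l, w.2 l ^ β l ∂ν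

lemma rieszFunctional_momentSequence [IsFiniteMeasure ν] {K : Set ((Fin n → ℝ) × (Fin p → ℝ))}
    (hK : IsCompact K) (hν : ∀ᵐ w ∂ν, w ∈ K) (q : MvPolynomial (Fin n ⊕ Fin p) ℝ) :
    rieszFunctional (momentSequence ν) q = ∫ w, evalXY n p q w ∂ν := by
  have hint := fun q => integrable_of_continuous_of_ae_mem_isCompact hK hν (continuous_evalXY q)
  induction q using MvPolynomial.induction_on' with
  | monomial d c =>
    simp only [rieszFunctional_monomial, evalXY_monomial, integral_const_mul]
    rfl
  | add q r hq hr =>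
    rw [map_add, hq, hr, ← integral_add (hint q) (hint r)]
    simp only [evalXY, map_add]

lemma relaxFeasible_momentSequence [Fintype ι] [IsFiniteMeasure ν] (hK : IsCompact (feasibleSet H))
    (hν : ∀ᵐ w ∂ν, w ∈ feasibleSet H) (hγ : ∀ β, γ β = ∫ w, ∏ l, w.2 l ^ β l ∂ν) (i : ℕ) :
    RelaxFeasible n p H γ i (momentSequence ν) := by
  simp only [RelaxFeasible, Lz_eq_rieszFunctional, rieszFunctional_momentSequence hK hν]
  refine ⟨fun q _ => integral_nonneg fun w => ?_, fun j q _ => integral_nonneg_of_ae ?_,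
    fun β _ => by simp [momentSequence, hγ]⟩
  · simp only [evalXY, map_pow]
    exact sq_nonneg _
  · filter_upwards [hν] with w hw
    simp only [evalXY, map_mul, map_pow]
    exact mul_nonneg (hw j) (sq_nonneg _)

lemma eventually_rhoSDP_le_integral [Fintype ι] [IsProbabilityMeasure ν]
    (harch : ArchimedeanQM n p H) (hK : IsCompact (feasibleSet H))
    (hν : ∀ᵐ w ∂ν, w ∈ feasibleSet H) (hγ : ∀ β, γ β = ∫ w, ∏ l, w.2 l ^ β l ∂ν)
    (f : MvPolynomial (Fin n ⊕ Fin p) ℝ) :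
    ∀ᶠ i in atTop, rhoSDP n p H γ f i ≤ ∫ w, evalXY n p f w ∂ν := by
  obtain ⟨R, -, hstate⟩ := exists_isAsymptoticState_feasibleFilter harch (γ := γ) (by simp [hγ])
  obtain ⟨B, hB⟩ := hstate.exists_abs_map_le f
  filter_upwards [eventually_feasibleFilter_iff.1 hB] with i hi
  refine csInf_le ⟨-B, ?_⟩ ⟨_, relaxFeasible_momentSequence hK hν hγ i, ?_⟩
  · rintro _ ⟨z, hz, rfl⟩
    rw [Lz_eq_rieszFunctional]
    exact (abs_le.1 (hi z hz)).1
  · rw [Lz_eq_rieszFunctional, rieszFunctional_momentSequence hK hν]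

end Moments

section NearlyOptimal

variable {φ : Measure (Fin p → ℝ)} [IsProbabilityMeasure φ] {xs : (Fin p → ℝ) → Fin n → ℝ}
  {f : MvPolynomial (Fin n ⊕ Fin p) ℝ}

lemma snd_eq_of_forall_moment_eq {ν : Measure ((Fin n → ℝ) × (Fin p → ℝ))} [IsFiniteMeasure ν]
    {K : Set ((Fin n → ℝ) × (Fin p → ℝ))} (hK : IsCompact K) (hν : ∀ᵐ w ∂ν, w ∈ K)
    (hφ : ∀ᵐ y ∂φ, y ∈ Prod.snd '' K)
    (h : ∀ β : Fin p → ℕ, ∫ w, ∏ l, w.2 l ^ β l ∂ν = ∫ y, ∏ l, y l ^ β l ∂φ) : ν.snd = φ := by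
  have hKsnd : IsCompact (Prod.snd '' K) := hK.image continuous_snd
  refine ext_of_forall_integral_prod_pow_eq hKsnd ?_ hφ fun β => ?_
  · exact (ae_map_iff measurable_snd.aemeasurable hKsnd.isClosed.measurableSet).2
      (hν.mono fun w hw => mem_image_of_mem _ hw)
  · rw [← h β, Measure.snd, integral_map measurable_snd.aemeasurable
      (Continuous.aestronglyMeasurable (by fun_prop))]

lemma IsState.map_eq_integral_of_map_le {L : MvPolynomial (Fin n ⊕ Fin p) ℝ →ₗ[ℝ] ℝ} {R : ℝ}
    (hL : IsState H R L) (hR : 0 < R) (hK : IsCompact (feasibleSet H))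
    (hmarginal : ∀ β : Fin p →₀ ℕ,
      L (rename Sum.inr (monomial β 1)) = ∫ y, ∏ l, y l ^ β l ∂φ)
    (hmin : ∀ᵐ y ∂φ, IsStrictMinimizer (feasibleSet H) (evalXY n p f) (xs y) y)
    (hle : L f ≤ ∫ y, evalXY n p f (xs y, y) ∂φ) (q : MvPolynomial (Fin n ⊕ Fin p) ℝ) :
    L q = ∫ y, evalXY n p q (xs y, y) ∂φ := by
  obtain ⟨ν, hν, hνK, hLν⟩ := hL.exists_measure_feasibleSet hR
  obtain rfl : ν.snd = φ := by
    refine snd_eq_of_forall_moment_eq hK hνK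
      (hmin.mono fun y hy => mem_image_of_mem Prod.snd hy.1) fun β => ?_
    have hβ := hmarginal (Finsupp.equivFunOnFinite.symm β)
    simpa [hLν, evalXY_rename_inr, eval_monomial, Finsupp.prod_fintype] using hβ
  have hgraph := aemeasurable_graph_of_isStrictMinimizer hK (continuous_evalXY f) hmin
  rw [hLν] at hle
  rw [hLν, ← integral_map hgraph (continuous_evalXY q).measurable.aestronglyMeasurable,
    ← eq_map_graph_of_integral_le hK (continuous_evalXY f) hνK hmin hle]

variable [Fintype ι]

lemma eventually_rhoSDP_le_integral_minimizer (harch : ArchimedeanQM n p H)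
    (hK : IsCompact (feasibleSet H)) (hγ : ∀ β, γ β = ∫ y, ∏ l, y l ^ β l ∂φ)
    (hmin : ∀ᵐ y ∂φ, IsStrictMinimizer (feasibleSet H) (evalXY n p f) (xs y) y) :
    ∀ᶠ i in atTop, rhoSDP n p H γ f i ≤ ∫ y, evalXY n p f (xs y, y) ∂φ := by
  have hgraph := aemeasurable_graph_of_isStrictMinimizer hK (continuous_evalXY f) hmin
  have := Measure.isProbabilityMeasure_map hgraph
  rw [← integral_map hgraph (continuous_evalXY f).measurable.aestronglyMeasurable]
  refine eventually_rhoSDP_le_integral harch hK ?_ (fun β => ?_) f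
  · exact (ae_map_iff hgraph hK.measurableSet).2 (hmin.mono fun y hy => hy.1)
  · rw [hγ, integral_map hgraph (Continuous.aestronglyMeasurable (by fun_prop))]

lemma tendsto_Lz_of_nearly_optimal (harch : ArchimedeanQM n p H)
    (hK : IsCompact (feasibleSet H)) (hγ : ∀ β, γ β = ∫ y, ∏ l, y l ^ β l ∂φ)
    (hmin : ∀ᵐ y ∂φ, IsStrictMinimizer (feasibleSet H) (evalXY n p f) (xs y) y)
    {z : ℕ → (Fin n → ℕ) → (Fin p → ℕ) → ℝ} {ε : ℕ → ℝ} (hε : Tendsto ε atTop (𝓝 0))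
    (hz : ∀ᶠ i in atTop, RelaxFeasible n p H γ i (z i) ∧
      Lz n p (z i) f ≤ rhoSDP n p H γ f i + ε i) (q : MvPolynomial (Fin n ⊕ Fin p) ℝ) :
    Tendsto (fun i => Lz n p (z i) q) atTop (𝓝 (∫ y, evalXY n p q (xs y, y) ∂φ)) := by
  simp only [Lz_eq_rieszFunctional] at hz ⊢
  refine tendsto_iff_ultrafilter _ _ _ |>.2 fun U hU => ?_
  have hfeas : (U.map fun i => rieszFunctional (z i) : Filter _) ≤ feasibleFilter H γ :=
    (tendsto_rieszFunctional_feasibleFilter (hz.mono fun i hi => hi.1)).mono_left hU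
  obtain ⟨R, hR, hstate⟩ :=
    exists_isAsymptoticState_feasibleFilter harch (γ := γ) (by simp [hγ])
  obtain ⟨Λ, hΛ, hlim⟩ := (hstate.mono hfeas).exists_isState_tendsto
  have hmarginal : ∀ β : Fin p →₀ ℕ,
      Λ (rename Sum.inr (monomial β 1)) = ∫ y, ∏ l, y l ^ β l ∂φ := fun β =>
    (tendsto_nhds_unique_of_eventuallyEq (hlim _) tendsto_const_nhds
      (hfeas (eventually_feasibleFilter_rename_inr β))).trans (hγ β)
  have hle : Λ f ≤ ∫ y, evalXY n p f (xs y, y) ∂φ := by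
    have hbound := (tendsto_const_nhds (x := ∫ y, evalXY n p f (xs y, y) ∂φ)).add hε
    rw [add_zero] at hbound
    refine le_of_tendsto_of_tendsto (tendsto_map'_iff.1 (hlim f)) (hbound.mono_left hU) (hU ?_)
    filter_upwards [hz, eventually_rhoSDP_le_integral_minimizer harch hK hγ hmin] with i hi hρ
    exact hi.2.trans (add_le_add_left hρ _)
  rw [← hΛ.map_eq_integral_of_map_le hR hK hmarginal hmin hle q]
  exact hlim q

end NearlyOptimal

end Relaxation

section BooleanFunction

variable {Ω : Type*} [MeasurableSpace Ω] {φ : Measure Ω} {b : Ω → ℝ}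

lemma integral_eq_measureReal_of_ae_eq_zero_or_one (hb : AEMeasurable b φ)
    (h01 : ∀ᵐ ω ∂φ, b ω = 0 ∨ b ω = 1) : ∫ ω, b ω ∂φ = φ.real {ω | b ω = 1} := by
  have hindicator : b =ᵐ[φ] (b ⁻¹' {1}).indicator 1 := by
    filter_upwards [h01] with ω hω
    rcases hω with h | h <;> simp [h]
  rw [integral_congr_ae hindicator,
    integral_indicator₀ (hb.nullMeasurableSet_preimage (measurableSet_singleton 1))]
  simp [Measure.real, preimage]

lemma ae_eq_zero_iff_integral_eq_zero_of_ae_eq_zero_or_one [IsFiniteMeasure φ]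
    (hb : AEMeasurable b φ) (h01 : ∀ᵐ ω ∂φ, b ω = 0 ∨ b ω = 1) :
    (∀ᵐ ω ∂φ, b ω = 0) ↔ ∫ ω, b ω ∂φ = 0 := by
  have hnonneg : 0 ≤ᵐ[φ] b := h01.mono fun ω hω => by rcases hω with h | h <;> simp [h]
  have hint : Integrable b φ := Integrable.of_bound hb.aestronglyMeasurable 1
    (h01.mono fun ω hω => by rcases hω with h | h <;> simp [h])
  exact (integral_eq_zero_iff_of_nonneg_ae hnonneg hint).symm

lemma ae_eq_one_iff_integral_eq_one_of_ae_eq_zero_or_one [IsProbabilityMeasure φ]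
    (hb : AEMeasurable b φ) (h01 : ∀ᵐ ω ∂φ, b ω = 0 ∨ b ω = 1) :
    (∀ᵐ ω ∂φ, b ω = 1) ↔ ∫ ω, b ω ∂φ = 1 := by
  rw [integral_eq_measureReal_of_ae_eq_zero_or_one hb h01, Measure.real, ENNReal.toReal_eq_one_iff]
  exact mem_ae_iff_prob_eq_one₀ (hb.nullMeasurableSet_preimage (measurableSet_singleton 1))

end BooleanFunction

/-- the relaxations compute the persistency
`φ({y : x*_k(y) = 1})` of a boolean variable `x_k`, with the corresponding
necessary and sufficient conditions. -/
theorem stmt17 (n p m s : ℕ)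
    (f : MvPolynomial (Fin n ⊕ Fin p) ℝ)
    (hx : Fin m → MvPolynomial (Fin n ⊕ Fin p) ℝ)
    (hy : Fin s → MvPolynomial (Fin p) ℝ)
    (H : Fin m ⊕ Fin s → MvPolynomial (Fin n ⊕ Fin p) ℝ)
    (hH : H = Sum.elim hx (fun k => rename Sum.inr (hy k)))
    (Y : Set (Fin p → ℝ)) (hYdef : Y = {y | ∀ k, 0 ≤ eval y (hy k)}) (hYc : IsCompact Y)
    (K : Set ((Fin n → ℝ) × (Fin p → ℝ)))
    (hKdef : K = {w | w.2 ∈ Y ∧ ∀ j, 0 ≤ evalXY n p (hx j) w}) (hKc : IsCompact K)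
    (Ky : (Fin p → ℝ) → Set (Fin n → ℝ))
    (hKy : ∀ y, Ky y = {x | ∀ j, 0 ≤ eval (Sum.elim x y) (hx j)})
    (hne : ∀ y ∈ Y, (Ky y).Nonempty)
    (harch : ArchimedeanQM n p H)
    (φ : Measure (Fin p → ℝ)) [IsProbabilityMeasure φ] (hφY : φ Yᶜ = 0)
    (γ : (Fin p → ℕ) → ℝ)
    (hγ : ∀ β, γ β = ∫ y in Y, ∏ l, y l ^ β l ∂φ)
    (J : (Fin p → ℝ) → ℝ)
    (hJ : ∀ y, J y = sInf ((fun x => evalXY n p f (x, y)) '' Ky y))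
    (Xstar : (Fin p → ℝ) → Set (Fin n → ℝ))
    (hXs : ∀ y, Xstar y = {x ∈ Ky y | evalXY n p f (x, y) = J y})
    (k : Fin n)
    (j1 : Fin m) (hj1 : hx j1 = X (Sum.inl k) ^ 2 - X (Sum.inl k))
    (j2 : Fin m) (hj2 : hx j2 = X (Sum.inl k) - X (Sum.inl k) ^ 2)
    (xstar : (Fin p → ℝ) → (Fin n → ℝ))
    (hxu : ∀ᵐ y ∂φ, Xstar y = {xstar y})
    (zi : ℕ → (Fin n → ℕ) → (Fin p → ℕ) → ℝ)
    (hzi : ∀ i, iZero n p H f ≤ i →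
      RelaxFeasible n p H γ i (zi i) ∧
      Lz n p (zi i) f ≤ rhoSDP n p H γ f i + 1 / (i : ℝ)) :
    Tendsto (fun i => zi i (fun j => if j = k then 1 else 0) (fun _ => 0)) atTop
      (𝓝 ((φ {y | y ∈ Y ∧ xstar y k = 1}).toReal)) ∧
    ((∀ᵐ y ∂φ, xstar y k = 1) ↔
      Tendsto (fun i => zi i (fun j => if j = k then 1 else 0) (fun _ => 0))
        atTop (𝓝 1)) ∧
    ((∀ᵐ y ∂φ, xstar y k = 0) ↔
      Tendsto (fun i => zi i (fun j => if j = k then 1 else 0) (fun _ => 0))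
        atTop (𝓝 0)) := by
  have hKH : K = feasibleSet H := by rw [hKdef, hYdef, hH, feasibleSet_sumElim_rename_inr]; rfl
  have hK : IsCompact (feasibleSet H) := hKH ▸ hKc
  have hφY' : ∀ᵐ y ∂φ, y ∈ Y := hφY
  have hmin : ∀ᵐ y ∂φ, IsStrictMinimizer (feasibleSet H) (evalXY n p f) (xstar y) y := by
    filter_upwards [hφY', hxu] with y hyY hargmin
    have hslice : Ky y = {x | (x, y) ∈ feasibleSet H} := by simp [hKy, ← hKH, hKdef, hyY, evalXY]
    rw [hXs, hJ, hslice] at hargmin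
    exact isStrictMinimizer_of_argmin_eq_singleton hK (continuous_evalXY f) hargmin
  have hmeas : AEMeasurable (fun y => xstar y k) φ := (measurable_pi_apply k).comp_aemeasurable
    (aemeasurable_of_isStrictMinimizer hK (continuous_evalXY f) hmin)
  have hbool : ∀ᵐ y ∂φ, xstar y k = 0 ∨ xstar y k = 1 := hmin.mono fun y hy =>
    eq_zero_or_one_of_mem_feasibleSet (j₁ := Sum.inl j1) (j₂ := Sum.inl j2) (by rw [hH, ← hj1]; rfl)
      (by rw [hH, ← hj2]; rfl) hy.1
  have hlim := tendsto_Lz_of_nearly_optimal harch hK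
    (fun β => by rw [hγ, Measure.restrict_eq_self_of_ae_mem hφY']) hmin
    tendsto_one_div_atTop_nhds_zero_nat ((eventually_ge_atTop _).mono hzi) (X (Sum.inl k))
  simp only [Lz_X_inl, evalXY, eval_X, Sum.elim_inl] at hlim
  have hprob : ∫ y, xstar y k ∂φ = (φ {y | y ∈ Y ∧ xstar y k = 1}).toReal :=
    (integral_eq_measureReal_of_ae_eq_zero_or_one hmeas hbool).trans <|
      measureReal_congr (hφY'.mono fun y hy => propext (and_iff_right hy).symm)
  have hiff (c : ℝ) : ∫ y, xstar y k ∂φ = c ↔ Tendsto _ atTop (𝓝 c) :=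
    ⟨fun h => h ▸ hlim, tendsto_nhds_unique hlim⟩
  exact ⟨(hiff _).1 hprob,
    (ae_eq_one_iff_integral_eq_one_of_ae_eq_zero_or_one hmeas hbool).trans (hiff 1),
    (ae_eq_zero_iff_integral_eq_zero_of_ae_eq_zero_or_one hmeas hbool).trans (hiff 0)⟩
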